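/- Let Q be a finite quiver with vertex set Q0 and arrow set Q1, with tail and head maps t,h : Q1 → Q0. For each vertex i fix a natural number r_i, real numbers σ_i ≠ 0 and τ_i, and an r_i × r_i complex matrix A_i; for each arrow a fix a complex matrix φ_a of size r_{ha} × r_{ta}, and define [φ,φ*]_i = Σ_{a : ha = i} φ_a ⬝ φ_a† − Σ_{a : ta = i} φ_a† ⬝ φ_a. Suppose that for every vertex i the vortex equation σ_i · A_i + [φ,φ*]_i = τ_i · Id_{r_i} holds. Then Σ_{a ∈ Q1} (τ_{ha}/σ_{ha} − τ_{ta}/σ_{ta}) · Tr(φ_a ⬝ φ_a†) = Σ_{i ∈ Q0} (τ_i² · r_i / σ_i − τ_i · Tr(A_i)). -/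

import Mathlib

/-!
Taking the trace of the vortex equation at `i` and multiplying by `τ i / σ i` gives
`(τ i / σ i) * tr [φ,φ*]_i = τ i ^ 2 * r i / σ i - τ i * tr (A i)`. Summing over the vertices, the
left-hand side becomes a sum over arrows: since `tr (φ_a† φ_a) = tr (φ_a φ_a†)`, each arrow
contributes `tr (φ_a φ_a†)` with weight `τ / σ` at its head and `-τ / σ` at its tail.
-/

open Matrix BigOperators

/-- Transport a square complex matrix along an equality of sizes. -/
noncomputable def castSq {m n : ℕ} (e : m = n) (M : Matrix (Fin m) (Fin m) ℂ) :
    Matrix (Fin n) (Fin n) ℂ :=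
  M.submatrix (finCongr e).symm (finCongr e).symm

/-- The commutator `[φ,φ*]_i` of a Higgs field on a quiver at the vertex `i`. -/
noncomputable def quiverComm {Q0 Q1 : Type} [Fintype Q1] [DecidableEq Q0]
    (t h : Q1 → Q0) (r : Q0 → ℕ)
    (φ : ∀ a : Q1, Matrix (Fin (r (h a))) (Fin (r (t a))) ℂ) (i : Q0) :
    Matrix (Fin (r i)) (Fin (r i)) ℂ :=
  (∑ a : Q1, if hh : h a = i then castSq (congrArg r hh) (φ a * (φ a)ᴴ) else 0)
    - ∑ a : Q1, if ht : t a = i then castSq (congrArg r ht) ((φ a)ᴴ * φ a) else 0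

theorem trace_castSq {m n : ℕ} (e : m = n) (M : Matrix (Fin m) (Fin m) ℂ) :
    (castSq e M).trace = M.trace := by
  subst e
  rfl

theorem trace_quiverComm {Q0 Q1 : Type} [Fintype Q1] [DecidableEq Q0]
    (t h : Q1 → Q0) (r : Q0 → ℕ)
    (φ : ∀ a : Q1, Matrix (Fin (r (h a))) (Fin (r (t a))) ℂ) (i : Q0) :
    (quiverComm t h r φ i).trace
      = ∑ a : Q1, ((if h a = i then (φ a * (φ a)ᴴ).trace else 0)
          - if t a = i then (φ a * (φ a)ᴴ).trace else 0) := by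
  rw [quiverComm, trace_sub, trace_sum, trace_sum, Finset.sum_sub_distrib]
  congr 1
  · refine Finset.sum_congr rfl fun a _ => ?_
    split_ifs
    · exact trace_castSq _ _
    · exact trace_zero _ _
  · refine Finset.sum_congr rfl fun a _ => ?_
    split_ifs
    · rw [trace_castSq, trace_mul_comm]
    · exact trace_zero _ _

theorem quiver_vortex_trace_constraint {Q0 Q1 : Type} [Fintype Q0] [Fintype Q1]
    [DecidableEq Q0] (t h : Q1 → Q0) (r : Q0 → ℕ)
    (σ τ : Q0 → ℝ) (hσ : ∀ i, σ i ≠ 0)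
    (A : ∀ i : Q0, Matrix (Fin (r i)) (Fin (r i)) ℂ)
    (φ : ∀ a : Q1, Matrix (Fin (r (h a))) (Fin (r (t a))) ℂ)
    (hvortex : ∀ i : Q0,
      (σ i : ℂ) • A i + quiverComm t h r φ i = (τ i : ℂ) • (1 : Matrix (Fin (r i)) (Fin (r i)) ℂ)) :
    ∑ a : Q1, ((τ (h a) / σ (h a) - τ (t a) / σ (t a) : ℝ) : ℂ) * (φ a * (φ a)ᴴ).trace
      = ∑ i : Q0, (((τ i ^ 2 * (r i : ℝ) / σ i : ℝ) : ℂ) - (τ i : ℂ) * (A i).trace) := by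
  have key : ∀ i : Q0, ((τ i ^ 2 * (r i : ℝ) / σ i : ℝ) : ℂ) - (τ i : ℂ) * (A i).trace
      = ((τ i / σ i : ℝ) : ℂ) * (quiverComm t h r φ i).trace := by
    intro i
    have hs : (σ i : ℂ) ≠ 0 := by exact_mod_cast hσ i
    have ht := congrArg trace (hvortex i)
    simp only [trace_add, trace_smul, trace_one, Fintype.card_fin, smul_eq_mul] at ht
    push_cast
    field_simp
    linear_combination -(τ i : ℂ) * ht
  simp only [key, trace_quiverComm, Finset.mul_sum]
  rw [Finset.sum_comm]
  refine Finset.sum_congr rfl fun a _ => ?_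
  simp only [mul_sub, Finset.sum_sub_distrib, mul_ite, mul_zero, Finset.sum_ite_eq,
    Finset.mem_univ, if_true]
  push_cast
  ring
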